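/- Let (X,d,𝔪) be a PI space with 𝔪(X) = ∞, and let E ⊂ X be an indecomposable set. Then any hole of E is saturated. -/

import Mathlib

open MeasureTheory Metric Filter Set ENNReal NNReal Topology

/-- A curve: a rectifiable continuous map from a compact interval into `X`,
parametrized by arc length (hence `1`-Lipschitz on `[0, len]`). -/
structure Curve (X : Type*) [MetricSpace X] where
  len : ℝ
  len_nonneg : 0 ≤ len
  toFun : ℝ → X
  lipschitzOn : LipschitzOnWith 1 toFun (Set.Icc 0 len)

namespace Curve

variable {X : Type*} [MetricSpace X]

/-- A curve is nonconstant if it attains two distinct values. -/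
def IsNonconstant (γ : Curve X) : Prop :=
  ∃ s ∈ Set.Icc (0:ℝ) γ.len, ∃ t ∈ Set.Icc (0:ℝ) γ.len, γ.toFun s ≠ γ.toFun t

/-- A curve lies in a set `W`. -/
def IsIn (γ : Curve X) (W : Set X) : Prop :=
  ∀ s ∈ Set.Icc (0:ℝ) γ.len, γ.toFun s ∈ W

end Curve

variable {X : Type*} [MetricSpace X] [MeasurableSpace X] [BorelSpace X]

/-- The curve integral `∫_γ g ds` for an arc-length parametrized curve. -/
noncomputable def curveLintegral (g : X → ℝ≥0∞) (γ : Curve X) : ℝ≥0∞ :=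
  ∫⁻ s in Set.Icc (0:ℝ) γ.len, g (γ.toFun s)

/-- The upper gradient inequality `|u(x) - u(y)| ≤ ∫_γ g ds` along a curve `γ`
with endpoints `x, y`. -/
def UpperGradIneq (g : X → ℝ≥0∞) (u : X → ℝ) (γ : Curve X) : Prop :=
  ENNReal.ofReal |u (γ.toFun 0) - u (γ.toFun γ.len)| ≤ curveLintegral g γ

/-- The 1-modulus of a family of curves. -/
noncomputable def mod1 (μ : Measure X) (Γ : Set (Curve X)) : ℝ≥0∞ :=
  ⨅ (ρ : X → ℝ≥0∞) (_ : Measurable ρ ∧ ∀ γ ∈ Γ, 1 ≤ curveLintegral ρ γ),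
    ∫⁻ x, ρ x ∂μ

/-- `g` is a 1-weak upper gradient of `u` in `W`: the upper gradient inequality
holds for all nonconstant curves in `W` outside a family of 1-modulus zero. -/
def IsWeakUpperGradientOn (μ : Measure X) (g : X → ℝ≥0∞) (u : X → ℝ) (W : Set X) : Prop :=
  Measurable g ∧
    mod1 μ {γ : Curve X | γ.IsNonconstant ∧ γ.IsIn W ∧ ¬ UpperGradIneq g u γ} = 0

/-- `g` is a (strong) upper gradient of `u` in `X`. -/
def IsUpperGradient (g : X → ℝ≥0∞) (u : X → ℝ) : Prop :=
  Measurable g ∧ ∀ γ : Curve X, γ.IsNonconstant → UpperGradIneq g u γ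

/-- `∫_W g_u dμ`: the integral over `W` of the minimal 1-weak upper gradient of `u`
in `W`, equivalently the infimum of `∫_W g dμ` over all 1-weak upper gradients `g`
of `u` in `W`. -/
noncomputable def gradEnergy (μ : Measure X) (u : X → ℝ) (W : Set X) : ℝ≥0∞ :=
  ⨅ (g : X → ℝ≥0∞) (_ : IsWeakUpperGradientOn μ g u W), ∫⁻ x in W, g x ∂μ

/-- `u` is locally Lipschitz on `W`. -/
def LocLipschitzOn (u : X → ℝ) (W : Set X) : Prop :=
  ∀ x ∈ W, ∃ K : ℝ≥0, ∃ t ∈ nhdsWithin x W, LipschitzOnWith K u t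

/-- Convergence `uᵢ → v` in `L¹_loc(W)`. -/
def TendstoL1loc (μ : Measure X) (W : Set X) (u : ℕ → X → ℝ) (v : X → ℝ) : Prop :=
  ∀ W' : Set X, IsOpen W' → IsCompact (closure W') → closure W' ⊆ W →
    Tendsto (fun i => ∫⁻ x in W', ENNReal.ofReal |u i x - v x| ∂μ) atTop (𝓝 0)

/-- The total variation `‖Dv‖(W)` of a function `v` in an open set `W`. -/
noncomputable def variationOn (μ : Measure X) (v : X → ℝ) (W : Set X) : ℝ≥0∞ :=
  ⨅ (u : ℕ → X → ℝ) (_ : (∀ i, LocLipschitzOn (u i) W) ∧ TendstoL1loc μ W u v),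
    Filter.liminf (fun i => gradEnergy μ (u i) W) Filter.atTop

/-- The total variation `‖Dv‖(A)` of a function `v` in an arbitrary set `A`. -/
noncomputable def totalVar (μ : Measure X) (v : X → ℝ) (A : Set X) : ℝ≥0∞ :=
  ⨅ (W : Set X) (_ : IsOpen W ∧ A ⊆ W), variationOn μ v W

/-- The perimeter `P(E, A) = ‖Dχ_E‖(A)`. -/
noncomputable def perimeter (μ : Measure X) (E A : Set X) : ℝ≥0∞ :=
  totalVar μ (Set.indicator E fun _ => (1 : ℝ)) A

/-- The measure `μ` is doubling. -/
def IsDoublingMeasure (μ : Measure X) : Prop :=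
  ∃ C : ℝ≥0∞, 1 ≤ C ∧ ∀ (x : X) (r : ℝ), 0 < r → μ (ball x (2 * r)) ≤ C * μ (ball x r)

/-- The space supports a (1,1)-Poincaré inequality:
`⨍_{B(x,r)} |u - u_{B(x,r)}| dμ ≤ C r ⨍_{B(x,λr)} g dμ` for every ball, every
`u ∈ L¹_loc(X)` and every upper gradient `g` of `u` (stated here multiplied
through by the measures of the two balls). -/
def SupportsPoincare (μ : Measure X) : Prop :=
  ∃ C lam : ℝ, 0 < C ∧ 1 ≤ lam ∧
    ∀ (x : X) (r : ℝ), 0 < r → ∀ (u : X → ℝ) (g : X → ℝ≥0∞),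
      (∀ (y : X) (s : ℝ), IntegrableOn u (ball y s) μ) → IsUpperGradient g u →
        μ (ball x (lam * r)) *
            ∫⁻ y in ball x r, ENNReal.ofReal |u y - ⨍ z in ball x r, u z ∂μ| ∂μ ≤
          ENNReal.ofReal (C * r) * μ (ball x r) * ∫⁻ y in ball x (lam * r), g y ∂μ

/-- `(X, d, μ)` is a PI space: complete, doubling, supporting a (1,1)-Poincaré
inequality. -/
def IsPISpace (μ : Measure X) : Prop :=
  CompleteSpace X ∧ IsDoublingMeasure μ ∧ SupportsPoincare μ

/-- A set `E` of finite perimeter is decomposable in a Borel set `D` if there is a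
partition `{F, G}` of `E ∩ D` into sets of finite perimeter in `D`, both of positive
measure, with `P(E,D) = P(F,D) + P(G,D)`. -/
def IsDecomposableIn (μ : Measure X) (E D : Set X) : Prop :=
  ∃ F G : Set X, MeasurableSet F ∧ MeasurableSet G ∧ Disjoint F G ∧ F ∪ G = E ∩ D ∧
    perimeter μ F D < ⊤ ∧ perimeter μ G D < ⊤ ∧ 0 < μ F ∧ 0 < μ G ∧
    perimeter μ E D = perimeter μ F D + perimeter μ G D

/-- `E` is indecomposable in `D`. -/
def IsIndecomposableIn (μ : Measure X) (E D : Set X) : Prop :=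
  ¬ IsDecomposableIn μ E D

/-- `{F i}_{i ∈ I}` is a (finite or countable) partition of `E` into indecomposable
Borel sets of positive measure and finite perimeter whose perimeters sum to `P(E,X)`;
this is the defining property of the essential connected components `𝒞𝒞ᵉ(E)`. -/
def IsEssentialPartition (μ : Measure X) (E : Set X) (I : Set ℕ) (F : ℕ → Set X) : Prop :=
  (∀ i ∈ I, MeasurableSet (F i)) ∧
  (∀ i ∈ I, ∀ j ∈ I, i ≠ j → Disjoint (F i) (F j)) ∧
  (⋃ i ∈ I, F i) = E ∧
  (∀ i ∈ I, 0 < μ (F i)) ∧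
  (∀ i ∈ I, perimeter μ (F i) Set.univ < ⊤) ∧
  (∀ i ∈ I, IsIndecomposableIn μ (F i) Set.univ) ∧
  perimeter μ E Set.univ = ∑' i : I, perimeter μ (F i.1) Set.univ

/-- Given a decomposition `{G i}_{i ∈ I}` of `X ∖ E` into essential connected
components, the saturation of `E`: the union of `E` and its holes, i.e. the
components of finite measure. -/
def saturationOf (μ : Measure X) (E : Set X) (I : Set ℕ) (G : ℕ → Set X) : Set X :=
  E ∪ ⋃ (i : ℕ) (_ : i ∈ I ∧ μ (G i) < ⊤), G i

/-- The measure-theoretic boundary `∂* E`: points where both `E` and its complement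
have strictly positive upper density. -/
def mtBoundary (μ : Measure X) (E : Set X) : Set X :=
  {x : X |
    0 < Filter.limsup (fun r => μ (ball x r ∩ E) / μ (ball x r)) (nhdsWithin 0 (Set.Ioi 0)) ∧
    0 < Filter.limsup (fun r => μ (ball x r \ E) / μ (ball x r)) (nhdsWithin 0 (Set.Ioi 0))}

/-- The restricted codimension-one Hausdorff content `ℋ_R`. -/
noncomputable def codimOneContent (μ : Measure X) (R : ℝ) (A : Set X) : ℝ≥0∞ :=
  ⨅ (s : Set (X × ℝ))
    (_ : s.Countable ∧ (∀ p ∈ s, 0 < p.2 ∧ p.2 ≤ R) ∧ A ⊆ ⋃ p ∈ s, ball p.1 p.2),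
    ∑' p : s, μ (ball (p : X × ℝ).1 (p : X × ℝ).2) / ENNReal.ofReal (p : X × ℝ).2

/-- The codimension-one Hausdorff measure `ℋ(A) = lim_{R → 0} ℋ_R(A)`. -/
noncomputable def codimOneHausdorff (μ : Measure X) (A : Set X) : ℝ≥0∞ :=
  ⨆ (R : ℝ) (_ : 0 < R), codimOneContent μ R A

/-!
The perimeter is submodular, `P(A ∩ B) + P(A ∪ B) ≤ P(A) + P(B)`, because the energy of upper
gradients is: along almost every curve, `min u v` and `max u v` inherit upper gradients from `u`
and `v` by swapping them where `v < u`. It is moreover invariant under complements and countably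
subadditive.

Say that `A` splits off from `F` if `P(A) + P(F \ A) ≤ P(F)`. By submodularity, if `A` splits off
from `F` then `S ∩ A` splits off from every `S ⊆ F`. Let `G` be a component of `Eᶜ`, and suppose
that `A` splits off from `Gᶜ` and does not meet `E`. Then `G` splits off from `G ∪ A`, so
`P(G) + 2 P(A) ≤ P(G ∪ A) + P(A) = P(Gᶜ \ A) + P(A) ≤ P(Gᶜ) = P(G)` and `P(A) = 0`. By the Poincaré
inequality `A` is null, since its complement contains `G`. If `E` is indecomposable, then each `A`
that splits off from `Gᶜ`, or else `Gᶜ \ A`, does not meet `E`, and hence is null. Thus `Gᶜ` is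
indecomposable: its only component is `Gᶜ` itself, which has infinite measure when `G` is a hole.
-/

section Line

variable {F : Type*} [NormedAddCommGroup F] [NormedSpace ℝ F]

theorem norm_deriv_le_of_eventually_norm_sub_le {𝕜 E F : Type*} [NontriviallyNormedField 𝕜]
    [NormedAddCommGroup E] [NormedSpace 𝕜 E] [NormedAddCommGroup F] [NormedSpace 𝕜 F]
    {f : 𝕜 → E} {g : 𝕜 → F} {g' : F} {t : 𝕜} (hg : HasDerivAt g g' t)
    (h : ∀ᶠ x in 𝓝 t, ‖f x - f t‖ ≤ ‖g x - g t‖) : ‖deriv f t‖ ≤ ‖g'‖ := by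
  by_cases hf : DifferentiableAt 𝕜 f t
  · refine le_of_tendsto_of_tendsto (hasDerivAt_iff_tendsto_slope.1 hf.hasDerivAt).norm
      (hasDerivAt_iff_tendsto_slope.1 hg).norm ?_
    filter_upwards [h.filter_mono nhdsWithin_le_nhds] with x hx
    simp only [slope_def_module, norm_smul]
    gcongr
  · simp [deriv_zero_of_not_differentiableAt hf]

theorem dist_le_integral_toReal {M : Type*} [PseudoMetricSpace M] {x y : M} {p : ℝ → ℝ≥0∞}
    {s t : ℝ} (hst : s ≤ t) (hp : AEMeasurable p (volume.restrict (Icc s t)))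
    (hfin : ∫⁻ r in Icc s t, p r ≠ ⊤) (h : edist x y ≤ ∫⁻ r in Icc s t, p r) :
    dist x y ≤ ∫ r in s..t, (p r).toReal := by
  rw [intervalIntegral.integral_of_le hst, ← integral_Icc_eq_integral_Ioc,
    integral_toReal hp (ae_lt_top' hp hfin), dist_edist]
  exact ENNReal.toReal_mono hfin h

theorem ae_enorm_deriv_le {f : ℝ → F} {a b : ℝ} {p : ℝ → ℝ≥0∞}
    (hp : AEMeasurable p (volume.restrict (Icc a b))) (hfin : ∫⁻ s in Icc a b, p s ≠ ⊤)
    (hf : ∀ s ∈ Icc a b, ∀ t ∈ Icc a b, s ≤ t → edist (f s) (f t) ≤ ∫⁻ x in Icc s t, p x) :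
    ∀ᵐ t, t ∈ Ioo a b → ‖deriv f t‖ₑ ≤ p t := by
  rcases lt_or_ge b a with hab | hab
  · simp [Ioo_eq_empty_of_le hab.le]
  have hint : IntervalIntegrable (fun s => (p s).toReal) volume a b :=
    (intervalIntegrable_iff_integrableOn_Icc_of_le hab).2
      (integrable_toReal_of_lintegral_ne_top hp hfin)
  have hint' {x} (hx : x ∈ Icc a b) : IntervalIntegrable (fun s => (p s).toReal) volume a x :=
    hint.mono_set (by simpa [uIcc_of_le, hab, hx.1] using Icc_subset_Icc_right hx.2)
  have key {s t} (hs : s ∈ Icc a b) (ht : t ∈ Icc a b) (hst : s ≤ t) :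
      dist (f s) (f t) ≤ ∫ x in s..t, (p x).toReal :=
    have hsub : Icc s t ⊆ Icc a b := Icc_subset_Icc hs.1 ht.2
    dist_le_integral_toReal hst (hp.mono_set hsub)
      (ne_top_of_le_ne_top hfin (lintegral_mono_set hsub)) (hf s hs t ht hst)
  filter_upwards [hint.ae_hasDerivAt_integral] with t ht htI
  have htI' := Ioo_subset_Icc_self htI
  rw [uIcc_of_le hab] at ht
  have hderiv : ‖deriv f t‖ ≤ ‖(p t).toReal‖ := by
    refine norm_deriv_le_of_eventually_norm_sub_le (ht htI' a (left_mem_Icc.2 hab)) ?_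
    filter_upwards [Icc_mem_nhds htI.1 htI.2] with x hx
    rw [intervalIntegral.integral_interval_sub_left (hint' hx) (hint' htI'), ← dist_eq_norm]
    rcases le_total t x with htx | hxt
    · rw [dist_comm]
      exact (key htI' hx htx).trans (le_abs_self _)
    · rw [intervalIntegral.integral_symm, norm_neg]
      exact (key hx htI' hxt).trans (le_abs_self _)
  rw [Real.norm_of_nonneg ENNReal.toReal_nonneg] at hderiv
  rw [← ofReal_norm]
  exact (ENNReal.ofReal_le_ofReal hderiv).trans ENNReal.ofReal_toReal_le

theorem ae_deriv_eq_of_eq (f g : ℝ → F) :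
    ∀ᵐ t, f t = g t → DifferentiableAt ℝ f t → DifferentiableAt ℝ g t → deriv f t = deriv g t := by
  set s := {t | f t = g t}
  -- Away from countably many points, `t` is a limit of points at which `f` and `g` agree.
  filter_upwards [(countable_setOfPred_isolated_right_within (s := s)).ae_notMem volume]
    with t ht hts hf hg
  have hacc : UniqueDiffWithinAt ℝ (s ∩ Ioi t) t := by
    rw [uniqueDiffWithinAt_iff_accPt, accPt_principal_iff_nhdsWithin, sdiff_singleton_eq_self
      (by simp), neBot_iff]
    exact fun h => ht ⟨hts, h⟩
  exact hacc.eq_deriv _ hf.hasDerivAt.hasDerivWithinAt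
    (hg.hasDerivAt.hasDerivWithinAt.congr (fun x hx => hx.1) hts)

theorem edist_le_lintegral_of_enorm_deriv_le {h : ℝ → ℝ} {a b : ℝ} (hab : a ≤ b)
    (hh : AbsolutelyContinuousOnInterval h a b) {r : ℝ → ℝ≥0∞}
    (hr : ∀ᵐ t, t ∈ Ioo a b → ‖deriv h t‖ₑ ≤ r t) :
    edist (h a) (h b) ≤ ∫⁻ t in Icc a b, r t :=
  calc edist (h a) (h b) = ‖∫ t in Ioo a b, deriv h t‖ₑ := by
        rw [edist_comm, edist_eq_enorm_sub, ← hh.integral_deriv_eq_sub,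
          intervalIntegral.integral_of_le hab, integral_Ioc_eq_integral_Ioo]
    _ ≤ ∫⁻ t in Ioo a b, ‖deriv h t‖ₑ := enorm_integral_le_lintegral_enorm _
    _ ≤ ∫⁻ t in Ioo a b, r t := lintegral_mono_ae ((ae_restrict_iff' measurableSet_Ioo).2 hr)
    _ ≤ ∫⁻ t in Icc a b, r t := lintegral_mono_set Ioo_subset_Icc_self

theorem edist_le_lintegral_piecewise {f g h : ℝ → ℝ} {a b : ℝ} (hab : a ≤ b)
    (hf : AbsolutelyContinuousOnInterval f a b) (hg : AbsolutelyContinuousOnInterval g a b)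
    (hh : AbsolutelyContinuousOnInterval h a b) {p q : ℝ → ℝ≥0∞}
    (hp : ∀ᵐ t, t ∈ Ioo a b → ‖deriv f t‖ₑ ≤ p t) (hq : ∀ᵐ t, t ∈ Ioo a b → ‖deriv g t‖ₑ ≤ q t)
    {T : Set ℝ} [DecidablePred (· ∈ T)]
    (hT : ∀ t ∈ Ioo a b ∩ T, h t = f t) (hT' : ∀ t ∈ Ioo a b \ T, h t = g t) :
    edist (h a) (h b) ≤ ∫⁻ t in Icc a b, T.piecewise p q t := by
  refine edist_le_lintegral_of_enorm_deriv_le hab hh ?_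
  filter_upwards [hf.ae_differentiableAt, hg.ae_differentiableAt, hh.ae_differentiableAt, hp, hq,
    ae_deriv_eq_of_eq h f, ae_deriv_eq_of_eq h g] with t hft hgt hht hpt hqt hhf hhg ht
  have ht' : t ∈ uIcc a b := Icc_subset_uIcc (Ioo_subset_Icc_self ht)
  by_cases htT : t ∈ T
  · rw [piecewise_eq_of_mem _ _ _ htT, hhf (hT t ⟨ht, htT⟩) (hht ht') (hft ht')]
    exact hpt ht
  · rw [piecewise_eq_of_notMem _ _ _ htT, hhg (hT' t ⟨ht, htT⟩) (hht ht') (hgt ht')]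
    exact hqt ht

end Line

section Curves

variable {X : Type*} [MetricSpace X] {W : Set X} {u v : X → ℝ} {g : X → ℝ≥0∞}

theorem Curve.continuousOn (γ : Curve X) : ContinuousOn γ.toFun (Icc 0 γ.len) :=
  γ.lipschitzOn.continuousOn

theorem Curve.aemeasurable [MeasurableSpace X] [BorelSpace X] (γ : Curve X) :
    AEMeasurable γ.toFun (volume.restrict (Icc 0 γ.len)) :=
  γ.continuousOn.aemeasurable measurableSet_Icc

theorem Curve.toFun_zero_eq_toFun_len {γ : Curve X} (hγ : ¬ γ.IsNonconstant) :
    γ.toFun 0 = γ.toFun γ.len := by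
  by_contra h
  exact hγ ⟨0, left_mem_Icc.2 γ.len_nonneg, γ.len, right_mem_Icc.2 γ.len_nonneg, h⟩

/-- The restriction of a curve to the parameter interval `[a, b]`, translated to start at `0`. -/
def Curve.restrict (γ : Curve X) {a b : ℝ} (ha : 0 ≤ a) (hab : a ≤ b) (hb : b ≤ γ.len) :
    Curve X where
  len := b - a
  len_nonneg := sub_nonneg.2 hab
  toFun s := γ.toFun (a + s)
  lipschitzOn := by
    have hmaps : MapsTo (a + ·) (Icc 0 (b - a)) (Icc 0 γ.len) := fun s hs =>
      ⟨add_nonneg ha hs.1, by linarith [hs.2]⟩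
    simpa only [mul_one, Function.comp_def] using
      γ.lipschitzOn.comp (isometry_add_left a).lipschitz.lipschitzOnWith hmaps

theorem Curve.IsIn.restrict {γ : Curve X} {W : Set X} (hγ : γ.IsIn W) {a b : ℝ} (ha : 0 ≤ a)
    (hab : a ≤ b) (hb : b ≤ γ.len) : (γ.restrict ha hab hb).IsIn W := fun s hs =>
  hγ (a + s) ⟨add_nonneg ha hs.1, by linarith [hs.2.trans_eq (show _ = b - a from rfl)]⟩

theorem Curve.IsIn.exists_lipschitzOnWith_comp {γ : Curve X} {W : Set X} (hγ : γ.IsIn W)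
    {u : X → ℝ} (hu : LocLipschitzOn u W) :
    ∃ K, LipschitzOnWith K (fun s => u (γ.toFun s)) (Icc 0 γ.len) := by
  obtain ⟨K, hK⟩ := LocallyLipschitzOn.exists_lipschitzOnWith_of_compact
    (isCompact_Icc.image_of_continuousOn γ.continuousOn)
    (LocallyLipschitzOn.mono hu (image_subset_iff.2 hγ))
  exact ⟨K * 1, hK.comp γ.lipschitzOn (mapsTo_image _ _)⟩

theorem curveLintegral_restrict (g : X → ℝ≥0∞) (γ : Curve X) {a b : ℝ} (ha : 0 ≤ a) (hab : a ≤ b)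
    (hb : b ≤ γ.len) :
    curveLintegral g (γ.restrict ha hab hb) = ∫⁻ s in Icc a b, g (γ.toFun s) := by
  rw [← (measurePreserving_add_left volume a).setLIntegral_comp_preimage_emb
    (MeasurableEquiv.addLeft a).measurableEmbedding (fun s => g (γ.toFun s)) (Icc a b)]
  simp [curveLintegral, Curve.restrict]

theorem curveLintegral_indicator {γ : Curve X} {W : Set X} (hγ : γ.IsIn W) (g : X → ℝ≥0∞) :
    curveLintegral (W.indicator g) γ = curveLintegral g γ :=
  setLIntegral_congr_fun measurableSet_Icc fun s hs => indicator_of_mem (hγ s hs) g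

theorem upperGradIneq_iff {g : X → ℝ≥0∞} {u : X → ℝ} {γ : Curve X} :
    UpperGradIneq g u γ ↔ edist (u (γ.toFun 0)) (u (γ.toFun γ.len)) ≤ curveLintegral g γ := by
  rw [UpperGradIneq, edist_dist, Real.dist_eq]

theorem upperGradIneq_of_not_isNonconstant {γ : Curve X} (hγ : ¬ γ.IsNonconstant)
    (g : X → ℝ≥0∞) (u : X → ℝ) : UpperGradIneq g u γ := by
  simp [upperGradIneq_iff, Curve.toFun_zero_eq_toFun_len hγ]

theorem locLipschitzOn_iff_locallyLipschitz_domRestrict :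
    LocLipschitzOn u W ↔ LocallyLipschitz (W.domRestrict u) :=
  locallyLipschitzOn_iff_restrict

theorem LocLipschitzOn.continuousOn (hu : LocLipschitzOn u W) : ContinuousOn u W :=
  LocallyLipschitzOn.continuousOn hu

theorem LocLipschitzOn.min (hu : LocLipschitzOn u W) (hv : LocLipschitzOn v W) :
    LocLipschitzOn (fun x => min (u x) (v x)) W := by
  rw [locLipschitzOn_iff_locallyLipschitz_domRestrict] at *
  exact LocallyLipschitz.min hu hv

theorem LocLipschitzOn.max (hu : LocLipschitzOn u W) (hv : LocLipschitzOn v W) :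
    LocLipschitzOn (fun x => max (u x) (v x)) W := by
  rw [locLipschitzOn_iff_locallyLipschitz_domRestrict] at *
  exact LocallyLipschitz.max hu hv

/-- `g` is a (strong) upper gradient of `u` in `W`: the upper gradient inequality holds along every
curve in `W`. On constant curves it holds trivially, so they need not be excluded. -/
def IsUpperGradientOn [MeasurableSpace X] (g : X → ℝ≥0∞) (u : X → ℝ) (W : Set X) : Prop :=
  Measurable g ∧ ∀ γ : Curve X, γ.IsIn W → UpperGradIneq g u γ

theorem IsUpperGradientOn.isUpperGradient [MeasurableSpace X] (hg : IsUpperGradientOn g u univ) :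
    IsUpperGradient g u :=
  ⟨hg.1, fun γ _ => hg.2 γ fun _ _ => mem_univ _⟩

theorem IsUpperGradientOn.mono [MeasurableSpace X] {V : Set X} (hVW : V ⊆ W)
    (hg : IsUpperGradientOn g u W) : IsUpperGradientOn g u V :=
  ⟨hg.1, fun γ hγ => hg.2 γ fun s hs => hVW (hγ s hs)⟩

theorem IsUpperGradientOn.edist_le_lintegral [MeasurableSpace X] (hg : IsUpperGradientOn g u W)
    {γ : Curve X} (hγ : γ.IsIn W) {a b : ℝ} (ha : 0 ≤ a) (hab : a ≤ b) (hb : b ≤ γ.len) :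
    edist (u (γ.toFun a)) (u (γ.toFun b)) ≤ ∫⁻ s in Icc a b, g (γ.toFun s) := by
  rw [← curveLintegral_restrict g γ ha hab hb]
  simpa [Curve.restrict] using upperGradIneq_iff.1 (hg.2 _ (hγ.restrict ha hab hb))

theorem gradEnergy_congr_of_edist_eq [MeasurableSpace X] (μ : Measure X)
    (h : ∀ x y, edist (u x) (u y) = edist (v x) (v y)) (W : Set X) :
    gradEnergy μ u W = gradEnergy μ v W := by
  simp only [gradEnergy, IsWeakUpperGradientOn, upperGradIneq_iff, h]

end Curves

section Modulus

variable {μ : Measure X}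

theorem curveLintegral_tsum {ρ : ℕ → X → ℝ≥0∞} (hρ : ∀ n, Measurable (ρ n)) (γ : Curve X) :
    curveLintegral (fun x => ∑' n, ρ n x) γ = ∑' n, curveLintegral (ρ n) γ :=
  lintegral_tsum fun n => (hρ n).comp_aemeasurable γ.aemeasurable

theorem curveLintegral_add {g : X → ℝ≥0∞} (hg : Measurable g) (ρ : X → ℝ≥0∞) (γ : Curve X) :
    curveLintegral (g + ρ) γ = curveLintegral g γ + curveLintegral ρ γ :=
  lintegral_add_left' (hg.comp_aemeasurable γ.aemeasurable) _

theorem curveLintegral_const_mul {g : X → ℝ≥0∞} (hg : Measurable g) (c : ℝ≥0∞) (γ : Curve X) :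
    curveLintegral (fun x => c * g x) γ = c * curveLintegral g γ :=
  lintegral_const_mul'' _ (hg.comp_aemeasurable γ.aemeasurable)

theorem exists_curveLintegral_eq_top_of_mod1_eq_zero {Γ : Set (Curve X)} (h : mod1 μ Γ = 0)
    {ε : ℝ≥0∞} (hε : ε ≠ 0) :
    ∃ ρ : X → ℝ≥0∞, Measurable ρ ∧ (∀ γ ∈ Γ, curveLintegral ρ γ = ⊤) ∧ ∫⁻ x, ρ x ∂μ < ε := by
  obtain ⟨δ, hδ, hsum⟩ := ENNReal.exists_pos_sum_of_countable' hε ℕ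
  have hex (n : ℕ) : ∃ ρ : X → ℝ≥0∞, (Measurable ρ ∧ ∀ γ ∈ Γ, 1 ≤ curveLintegral ρ γ) ∧
      ∫⁻ x, ρ x ∂μ < δ n := by
    have : mod1 μ Γ < δ n := h ▸ hδ n
    simpa only [mod1, iInf_lt_iff, exists_prop] using this
  choose ρ hρ hlt using hex
  refine ⟨fun x => ∑' n, ρ n x, Measurable.tsum fun n => (hρ n).1, fun γ hγ => ?_, ?_⟩
  · rw [curveLintegral_tsum fun n => (hρ n).1, ← top_le_iff]
    calc (⊤ : ℝ≥0∞) = ∑' _ : ℕ, 1 := (ENNReal.tsum_const_eq_top_of_ne_zero one_ne_zero).symm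
      _ ≤ ∑' n, curveLintegral (ρ n) γ := ENNReal.tsum_le_tsum fun n => (hρ n).2 γ hγ
  · rw [lintegral_tsum fun n => (hρ n).1.aemeasurable]
    exact (ENNReal.tsum_le_tsum fun n => (hlt n).le).trans_lt hsum

theorem mod1_eq_zero_of_curveLintegral_eq_top {Γ : Set (Curve X)} {ρ : X → ℝ≥0∞}
    (hρ : Measurable ρ) (hfin : ∫⁻ x, ρ x ∂μ ≠ ⊤) (h : ∀ γ ∈ Γ, curveLintegral ρ γ = ⊤) :
    mod1 μ Γ = 0 := by
  have hbound (n : ℕ) : mod1 μ Γ ≤ (n : ℝ≥0∞)⁻¹ * ∫⁻ x, ρ x ∂μ := by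
    rw [← lintegral_const_mul _ hρ]
    refine iInf₂_le (fun x => (n : ℝ≥0∞)⁻¹ * ρ x) ⟨hρ.const_mul _, fun γ hγ => ?_⟩
    rw [curveLintegral_const_mul hρ, h γ hγ, ENNReal.mul_top (by simp)]
    exact le_top
  have hlim : Tendsto (fun n : ℕ => (n : ℝ≥0∞)⁻¹ * ∫⁻ x, ρ x ∂μ) atTop (𝓝 0) := by
    simpa using ENNReal.Tendsto.mul_const ENNReal.tendsto_inv_nat_nhds_zero (Or.inr hfin)
  exact nonpos_iff_eq_zero.1 (ge_of_tendsto' hlim hbound)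

end Modulus

section UpperGradient

variable {μ : Measure X} {W : Set X} {u v w : X → ℝ} {p q g : X → ℝ≥0∞}

theorem IsUpperGradientOn.isWeakUpperGradientOn (hg : IsUpperGradientOn g u W) :
    IsWeakUpperGradientOn μ g u W :=
  ⟨hg.1, mod1_eq_zero_of_curveLintegral_eq_top measurable_zero (by simp)
    fun γ hγ => (hγ.2.2 (hg.2 γ hγ.2.1)).elim⟩

theorem IsWeakUpperGradientOn.exists_isUpperGradientOn (hg : IsWeakUpperGradientOn μ g u W)
    {ε : ℝ≥0∞} (hε : ε ≠ 0) :
    ∃ g', IsUpperGradientOn g' u W ∧ ∫⁻ x in W, g' x ∂μ ≤ ∫⁻ x in W, g x ∂μ + ε := by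
  obtain ⟨hgm, hmod⟩ := hg
  obtain ⟨ρ, hρm, hρ, hρε⟩ := exists_curveLintegral_eq_top_of_mod1_eq_zero hmod hε
  refine ⟨g + ρ, ⟨hgm.add hρm, fun γ hγW => ?_⟩, ?_⟩
  · by_cases hγ : γ.IsNonconstant
    · rw [UpperGradIneq, curveLintegral_add hgm]
      by_cases hb : UpperGradIneq g u γ
      · exact hb.trans le_self_add
      · simp [hρ γ ⟨hγ, hγW, hb⟩]
    · exact upperGradIneq_of_not_isNonconstant hγ _ _
  · simp only [Pi.add_apply]
    rw [lintegral_add_left hgm]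
    gcongr
    exact (setLIntegral_le_lintegral _ _).trans hρε.le

theorem gradEnergy_eq_iInf_isUpperGradientOn (μ : Measure X) (u : X → ℝ) (W : Set X) :
    gradEnergy μ u W = ⨅ (g : X → ℝ≥0∞) (_ : IsUpperGradientOn g u W), ∫⁻ x in W, g x ∂μ := by
  refine le_antisymm (le_iInf₂ fun g hg => iInf₂_le g hg.isWeakUpperGradientOn)
    (le_iInf₂ fun g hg => ENNReal.le_of_forall_pos_le_add fun ε hε _ => ?_)
  obtain ⟨g', hg', hle⟩ := hg.exists_isUpperGradientOn (ENNReal.coe_ne_zero.2 hε.ne')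
  exact (iInf₂_le g' hg').trans hle

theorem IsUpperGradientOn.upperGradIneq_piecewise {S : Set X} [DecidablePred (· ∈ S)]
    (hu : LocLipschitzOn u W) (hv : LocLipschitzOn v W) (hw : LocLipschitzOn w W)
    (hp : IsUpperGradientOn p u W) (hq : IsUpperGradientOn q v W)
    (hS : EqOn w u (W ∩ S)) (hS' : EqOn w v (W \ S)) {γ : Curve X} (hγ : γ.IsIn W)
    (hpγ : curveLintegral p γ ≠ ⊤) (hqγ : curveLintegral q γ ≠ ⊤) :
    UpperGradIneq (S.piecewise p q) w γ := by
  have hac {f : X → ℝ} (hf : LocLipschitzOn f W) :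
      AbsolutelyContinuousOnInterval (fun s => f (γ.toFun s)) 0 γ.len := by
    obtain ⟨K, hK⟩ := hγ.exists_lipschitzOnWith_comp hf
    exact LipschitzOnWith.absolutelyContinuousOnInterval (by rwa [uIcc_of_le γ.len_nonneg])
  have hderiv {f : X → ℝ} {g : X → ℝ≥0∞} (hg : IsUpperGradientOn g f W)
      (hgγ : curveLintegral g γ ≠ ⊤) :
      ∀ᵐ s, s ∈ Ioo 0 γ.len → ‖deriv (fun s => f (γ.toFun s)) s‖ₑ ≤ g (γ.toFun s) :=
    ae_enorm_deriv_le (hg.1.comp_aemeasurable γ.aemeasurable) hgγ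
      fun s hs t ht hst => hg.edist_le_lintegral hγ hs.1 hst ht.2
  rw [upperGradIneq_iff]
  let : DecidablePred (· ∈ γ.toFun ⁻¹' S) := fun s => inferInstanceAs (Decidable (γ.toFun s ∈ S))
  refine edist_le_lintegral_piecewise (T := γ.toFun ⁻¹' S) γ.len_nonneg (hac hu) (hac hv) (hac hw)
    (hderiv hp hpγ) (hderiv hq hqγ) (fun s hs => ?_) fun s hs => ?_
  · exact hS ⟨hγ s (Ioo_subset_Icc_self hs.1), hs.2⟩
  · exact hS' ⟨hγ s (Ioo_subset_Icc_self hs.1), hs.2⟩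

theorem IsUpperGradientOn.isWeakUpperGradientOn_piecewise {S : Set X} [DecidablePred (· ∈ S)]
    (hW : MeasurableSet W) (hu : LocLipschitzOn u W) (hv : LocLipschitzOn v W)
    (hw : LocLipschitzOn w W) (hp : IsUpperGradientOn p u W) (hq : IsUpperGradientOn q v W)
    (hpfin : ∫⁻ x in W, p x ∂μ ≠ ⊤) (hqfin : ∫⁻ x in W, q x ∂μ ≠ ⊤) (hSm : MeasurableSet S)
    (hS : EqOn w u (W ∩ S)) (hS' : EqOn w v (W \ S)) :
    IsWeakUpperGradientOn μ (S.piecewise p q) w W := by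
  refine ⟨hp.1.piecewise hSm hq.1, mod1_eq_zero_of_curveLintegral_eq_top
    ((hp.1.add hq.1).indicator hW) ?_ fun γ ⟨_, hγ, hγw⟩ => ?_⟩
  · simp only [lintegral_indicator hW, Pi.add_apply, lintegral_add_left hp.1]
    exact ENNReal.add_ne_top.2 ⟨hpfin, hqfin⟩
  · rw [curveLintegral_indicator hγ, curveLintegral_add hp.1]
    contrapose! hγw
    rw [ENNReal.add_ne_top] at hγw
    exact hp.upperGradIneq_piecewise hu hv hw hq hS hS' hγ hγw.1 hγw.2

theorem measurableSet_inter_setOf_le (hW : MeasurableSet W) (hu : ContinuousOn u W)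
    (hv : ContinuousOn v W) : MeasurableSet (W ∩ {x | u x ≤ v x}) := by
  obtain ⟨C, hC, hCW⟩ := continuousOn_iff_isClosed.1 (hv.sub hu) (Ici 0) isClosed_Ici
  have : W ∩ {x | u x ≤ v x} = C ∩ W := by
    rw [← hCW, inter_comm]
    simp [preimage]
  exact this ▸ hC.measurableSet.inter hW

theorem lintegral_piecewise_add_piecewise_swap {α : Type*} [MeasurableSpace α] (μ : Measure α)
    {S : Set α} [DecidablePred (· ∈ S)] (hS : MeasurableSet S) {p q : α → ℝ≥0∞}
    (hp : Measurable p) (hq : Measurable q) :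
    ∫⁻ x, S.piecewise p q x ∂μ + ∫⁻ x, S.piecewise q p x ∂μ =
      ∫⁻ x, p x ∂μ + ∫⁻ x, q x ∂μ := by
  rw [← lintegral_add_left (hp.piecewise hS hq), ← lintegral_add_left hp]
  refine lintegral_congr fun x => ?_
  by_cases hx : x ∈ S <;> simp [hx, add_comm]

theorem gradEnergy_min_add_gradEnergy_max_le (μ : Measure X) (hW : MeasurableSet W)
    (hu : LocLipschitzOn u W) (hv : LocLipschitzOn v W) :
    gradEnergy μ (fun x => min (u x) (v x)) W + gradEnergy μ (fun x => max (u x) (v x)) W ≤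
      gradEnergy μ u W + gradEnergy μ v W := by
  classical
  rw [gradEnergy_eq_iInf_isUpperGradientOn μ u, gradEnergy_eq_iInf_isUpperGradientOn μ v]
  refine ENNReal.le_iInf₂_add_iInf₂ fun p hp q hq => ?_
  rcases eq_or_ne (∫⁻ x in W, p x ∂μ) ⊤ with h | hpfin
  · simp [h]
  rcases eq_or_ne (∫⁻ x in W, q x ∂μ) ⊤ with h | hqfin
  · simp [h]
  set S := W ∩ {x | u x ≤ v x}
  have hS : MeasurableSet S :=
    measurableSet_inter_setOf_le hW hu.continuousOn hv.continuousOn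
  have hle {x : X} (hx : x ∈ W ∩ S) : u x ≤ v x := hx.2.2
  have hge {x : X} (hx : x ∈ W \ S) : v x ≤ u x := (not_le.1 fun h => hx.2 ⟨hx.1, h⟩).le
  rw [← lintegral_piecewise_add_piecewise_swap _ hS hp.1 hq.1]
  refine add_le_add (iInf₂_le _ ?_) (iInf₂_le _ ?_)
  · exact hp.isWeakUpperGradientOn_piecewise hW hu hv (hu.min hv) hq hpfin hqfin hS
      (fun x hx => min_eq_left (hle hx)) fun x hx => min_eq_right (hge hx)
  · exact hq.isWeakUpperGradientOn_piecewise hW hv hu (hu.max hv) hp hqfin hpfin hS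
      (fun x hx => max_eq_right (hle hx)) fun x hx => max_eq_left (hge hx)

theorem gradEnergy_mono (μ : Measure X) (u : X → ℝ) {V : Set X} (hVW : V ⊆ W) :
    gradEnergy μ u V ≤ gradEnergy μ u W := by
  rw [gradEnergy_eq_iInf_isUpperGradientOn μ u W]
  exact le_iInf₂ fun g hg => (iInf₂_le g (hg.mono hVW).isWeakUpperGradientOn).trans
    (lintegral_mono_set hVW)

theorem gradEnergy_const (μ : Measure X) (c : ℝ) (W : Set X) :
    gradEnergy μ (fun _ => c) W = 0 := by
  rw [gradEnergy_eq_iInf_isUpperGradientOn, ← nonpos_iff_eq_zero]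
  exact (iInf₂_le 0 ⟨measurable_zero, fun γ _ => by simp [UpperGradIneq]⟩).trans (by simp)

end UpperGradient

theorem exists_isOpen_exhaustion {X : Type*} [TopologicalSpace X] [T2Space X]
    [LocallyCompactSpace X] [SecondCountableTopology X] {W : Set X} (hW : IsOpen W) :
    ∃ V : ℕ → Set X, Monotone V ∧ (∀ n, IsOpen (V n) ∧ IsCompact (closure (V n)) ∧
      closure (V n) ⊆ W) ∧ ∀ K ⊆ W, IsCompact K → ∃ n, K ⊆ V n := by
  have := hW.locallyCompactSpace
  let K : CompactExhaustion W := default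
  have hcl (n : ℕ) : closure (Subtype.val '' interior (K n) : Set X) ⊆ Subtype.val '' K n :=
    closure_minimal (image_mono interior_subset)
      ((K.isCompact n).image continuous_subtype_val).isClosed
  refine ⟨fun n => Subtype.val '' interior (K n), fun m n hmn => image_mono
    (interior_mono (K.subset hmn)), fun n => ⟨hW.isOpenMap_subtype_val _ isOpen_interior,
    ((K.isCompact n).image continuous_subtype_val).of_isClosed_subset isClosed_closure (hcl n),
    (hcl n).trans (Subtype.coe_image_subset _ _)⟩, fun L hLW hL => ?_⟩
  obtain ⟨n, hn⟩ := K.exists_superset_of_isCompact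
    (IsInducing.subtypeVal.isCompact_preimage' hL (hLW.trans_eq Subtype.range_coe.symm))
  exact ⟨n + 1, fun x hx => ⟨⟨x, hLW hx⟩, K.subset_interior_succ n (hn hx), rfl⟩⟩

section TotalVariation

variable {X : Type*} [MetricSpace X] [MeasurableSpace X] {μ : Measure X} {W : Set X}
  {f g h : X → ℝ} {u v w : ℕ → X → ℝ}

theorem tendstoL1loc_iff : TendstoL1loc μ W u f ↔
    ∀ W', IsOpen W' → IsCompact (closure W') → closure W' ⊆ W →
      Tendsto (fun i => ∫⁻ x in W', edist (u i x) (f x) ∂μ) atTop (𝓝 0) := by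
  simp only [TendstoL1loc, edist_dist, Real.dist_eq]

theorem tendstoL1loc_const (f : X → ℝ) (W : Set X) : TendstoL1loc μ W (fun _ => f) f := by
  simp [tendstoL1loc_iff]

theorem TendstoL1loc.comp (hu : TendstoL1loc μ W u f) {φ : ℕ → ℕ} (hφ : Tendsto φ atTop atTop) :
    TendstoL1loc μ W (u ∘ φ) f :=
  fun W' ho hc hW => (hu W' ho hc hW).comp hφ

theorem lintegral_edist_le_add {α : Type*} [MeasurableSpace α] {ν : Measure α} {u v w f g h : α → ℝ}
    (hu : AEMeasurable u ν) (hf : AEMeasurable f ν)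
    (hle : ∀ x, edist (w x) (h x) ≤ edist (u x) (f x) + edist (v x) (g x)) :
    ∫⁻ x, edist (w x) (h x) ∂ν ≤ ∫⁻ x, edist (u x) (f x) ∂ν + ∫⁻ x, edist (v x) (g x) ∂ν := by
  rw [← lintegral_add_left' (hu.edist hf)]
  exact lintegral_mono hle

theorem TendstoL1loc.of_edist_le_add (hu : TendstoL1loc μ W u f) (hv : TendstoL1loc μ W v g)
    (hum : ∀ i, AEMeasurable (u i) (μ.restrict W)) (hf : AEMeasurable f (μ.restrict W))
    (hle : ∀ i x, edist (w i x) (h x) ≤ edist (u i x) (f x) + edist (v i x) (g x)) :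
    TendstoL1loc μ W w h := by
  rw [tendstoL1loc_iff] at *
  intro W' ho hc hW
  have hmono : μ.restrict W' ≤ μ.restrict W :=
    Measure.restrict_mono (subset_closure.trans hW) le_rfl
  refine tendsto_of_tendsto_of_tendsto_of_le_of_le tendsto_const_nhds
    (by simpa using (hu W' ho hc hW).add (hv W' ho hc hW)) (fun _ => bot_le) fun i => ?_
  exact lintegral_edist_le_add ((hum i).mono_measure hmono) (hf.mono_measure hmono) (hle i)

theorem TendstoL1loc.min (hu : TendstoL1loc μ W u f) (hv : TendstoL1loc μ W v g)
    (hum : ∀ i, AEMeasurable (u i) (μ.restrict W)) (hf : AEMeasurable f (μ.restrict W)) :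
    TendstoL1loc μ W (fun i x => min (u i x) (v i x)) fun x => min (f x) (g x) := by
  refine hu.of_edist_le_add hv hum hf fun i x => ?_
  simp only [edist_dist, Real.dist_eq, ← ENNReal.ofReal_add (abs_nonneg _) (abs_nonneg _)]
  exact ENNReal.ofReal_le_ofReal ((abs_min_sub_min_le_max _ _ _ _).trans
    (max_le_add_of_nonneg (abs_nonneg _) (abs_nonneg _)))

theorem TendstoL1loc.max (hu : TendstoL1loc μ W u f) (hv : TendstoL1loc μ W v g)
    (hum : ∀ i, AEMeasurable (u i) (μ.restrict W)) (hf : AEMeasurable f (μ.restrict W)) :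
    TendstoL1loc μ W (fun i x => max (u i x) (v i x)) fun x => max (f x) (g x) := by
  refine hu.of_edist_le_add hv hum hf fun i x => ?_
  simp only [edist_dist, Real.dist_eq, ← ENNReal.ofReal_add (abs_nonneg _) (abs_nonneg _)]
  exact ENNReal.ofReal_le_ofReal ((abs_max_sub_max_le_max _ _ _ _).trans
    (max_le_add_of_nonneg (abs_nonneg _) (abs_nonneg _)))

theorem variationOn_eq_iInf_iSup (μ : Measure X) (f : X → ℝ) (W : Set X) :
    variationOn μ f W = ⨅ (u : ℕ → X → ℝ)
      (_ : (∀ i, LocLipschitzOn (u i) W) ∧ TendstoL1loc μ W u f), ⨆ i, gradEnergy μ (u i) W := by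
  refine le_antisymm (iInf₂_mono fun u _ => ?_) (le_of_forall_gt_imp_ge_of_dense fun c hc => ?_)
  · exact (liminf_le_liminf (.of_forall (le_iSup _))).trans_eq (liminf_const _)
  · simp only [variationOn, iInf_lt_iff, exists_prop] at hc
    obtain ⟨u, ⟨hu, huf⟩, hlt⟩ := hc
    obtain ⟨φ, hφ, hφc⟩ := extraction_of_frequently_atTop
      (frequently_lt_of_liminf_lt (by isBoundedDefault) hlt)
    exact (iInf₂_le (u ∘ φ) ⟨fun i => hu (φ i), huf.comp hφ.tendsto_atTop⟩).trans
      (iSup_le fun i => (hφc i).le)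

theorem liminf_add_liminf_le_of_forall_add_le {a b : ℕ → ℝ≥0∞} {c : ℝ≥0∞}
    (hab : ∀ n, a n + b n ≤ c) : liminf a atTop + liminf b atTop ≤ c := by
  rw [liminf_eq_iSup_iInf_of_nat, liminf_eq_iSup_iInf_of_nat]
  exact ENNReal.iSup_add_iSup_le fun i j => (add_le_add (iInf₂_le _ (le_max_left i j))
    (iInf₂_le _ (le_max_right i j))).trans (hab _)

theorem variationOn_min_add_variationOn_max_le [BorelSpace X] (hW : MeasurableSet W)
    (hf : AEMeasurable f (μ.restrict W)) (g : X → ℝ) :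
    variationOn μ (fun x => min (f x) (g x)) W + variationOn μ (fun x => max (f x) (g x)) W ≤
      variationOn μ f W + variationOn μ g W := by
  rw [variationOn_eq_iInf_iSup μ f, variationOn_eq_iInf_iSup μ g]
  refine ENNReal.le_iInf₂_add_iInf₂ fun u ⟨hu, huf⟩ v ⟨hv, hvg⟩ => ?_
  have hum (i : ℕ) : AEMeasurable (u i) (μ.restrict W) := (hu i).continuousOn.aemeasurable hW
  refine (add_le_add (iInf₂_le _ ⟨fun i => (hu i).min (hv i), huf.min hvg hum hf⟩)
    (iInf₂_le _ ⟨fun i => (hu i).max (hv i), huf.max hvg hum hf⟩)).trans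
    (liminf_add_liminf_le_of_forall_add_le fun i => ?_)
  exact (gradEnergy_min_add_gradEnergy_max_le μ hW (hu i) (hv i)).trans
    (add_le_add (le_iSup (fun i => gradEnergy μ (u i) W) i)
      (le_iSup (fun i => gradEnergy μ (v i) W) i))

theorem variationOn_congr_ae (hfg : f =ᵐ[μ] g) (W : Set X) :
    variationOn μ f W = variationOn μ g W := by
  have hiff (u : ℕ → X → ℝ) : TendstoL1loc μ W u f ↔ TendstoL1loc μ W u g := by
    have hint (W' : Set X) (i : ℕ) :
        ∫⁻ x in W', edist (u i x) (f x) ∂μ = ∫⁻ x in W', edist (u i x) (g x) ∂μ :=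
      lintegral_congr_ae (ae_restrict_of_ae (hfg.mono fun x hx => by simp only [hx]))
    simp only [tendstoL1loc_iff, hint]
  simp only [variationOn, hiff]

theorem variationOn_const [BorelSpace X] (c : ℝ) (W : Set X) : variationOn μ (fun _ => c) W = 0 :=
  nonpos_iff_eq_zero.1 <| (iInf₂_le (fun _ _ => c) ⟨fun _ =>
    LocallyLipschitz.const c |>.locallyLipschitzOn, tendstoL1loc_const _ W⟩).trans
      (by simp only [gradEnergy_const, liminf_const, le_refl])

theorem variationOn_le_liminf [BorelSpace X] [LocallyCompactSpace X]
    [SecondCountableTopology X] (hW : IsOpen W) (hw : ∀ i, AEMeasurable (w i) (μ.restrict W))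
    (hwf : TendstoL1loc μ W w f) :
    variationOn μ f W ≤ liminf (fun i => variationOn μ (w i) W) atTop := by
  refine le_of_forall_gt_imp_ge_of_dense fun c hc => ?_
  obtain ⟨φ, hφ, hφc⟩ := extraction_of_frequently_atTop
    (frequently_lt_of_liminf_lt (by isBoundedDefault) hc)
  obtain ⟨V, hVmono, hV, hVW⟩ := exists_isOpen_exhaustion hW
  have hclose (k : ℕ) : ∃ u, LocLipschitzOn u W ∧ gradEnergy μ u W ≤ c ∧
      ∫⁻ x in V k, edist (u x) (w (φ k) x) ∂μ < (k : ℝ≥0∞)⁻¹ := by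
    have hk := hφc k
    simp only [variationOn_eq_iInf_iSup, iInf_lt_iff, exists_prop] at hk
    obtain ⟨u, ⟨hu, huw⟩, hlt⟩ := hk
    obtain ⟨i, hi⟩ := ((tendstoL1loc_iff.1 huw _ (hV k).1 (hV k).2.1 (hV k).2.2).eventually_lt_const
      (ENNReal.inv_pos.2 (ENNReal.natCast_ne_top k))).exists
    exact ⟨u i, hu i, (le_iSup (fun i => gradEnergy μ (u i) W) i).trans hlt.le, hi⟩
  choose u hu huc huw using hclose
  refine (iInf₂_le u ⟨hu, tendstoL1loc_iff.2 fun W' ho hc hW' => ?_⟩).trans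
    ((liminf_le_liminf (.of_forall huc)).trans_eq (liminf_const c))
  obtain ⟨m, hm⟩ := hVW _ hW' hc
  have hlim := tendstoL1loc_iff.1 (hwf.comp hφ.tendsto_atTop) W' ho hc hW'
  refine tendsto_of_tendsto_of_tendsto_of_le_of_le' tendsto_const_nhds
    (by simpa using ENNReal.tendsto_inv_nat_nhds_zero.add hlim) (.of_forall fun _ => bot_le) ?_
  filter_upwards [eventually_ge_atTop m] with k hk
  have hmono : μ.restrict W' ≤ μ.restrict W :=
    Measure.restrict_mono (subset_closure.trans hW') le_rfl
  refine (lintegral_edist_le_add (((hu k).continuousOn.aemeasurable hW.measurableSet).mono_measure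
    hmono) ((hw (φ k)).mono_measure hmono) fun x => edist_triangle _ (w (φ k) x) _).trans ?_
  exact add_le_add_left ((lintegral_mono_set
    (subset_closure.trans (hm.trans (hVmono hk)))).trans (huw k).le) _

theorem TendstoL1loc.mono {V : Set X} (hVW : V ⊆ W) (hu : TendstoL1loc μ W u f) :
    TendstoL1loc μ V u f :=
  fun W' ho hc hV => hu W' ho hc (hV.trans hVW)

theorem variationOn_mono [BorelSpace X] {V : Set X} (hVW : V ⊆ W) :
    variationOn μ f V ≤ variationOn μ f W :=
  le_iInf₂ fun u hu => (iInf₂_le u ⟨fun i => LocallyLipschitzOn.mono (hu.1 i) hVW,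
    hu.2.mono hVW⟩).trans (liminf_le_liminf (.of_forall fun i => gradEnergy_mono μ (u i) hVW))

theorem totalVar_le_variationOn {A : Set X} (hW : IsOpen W) (hAW : A ⊆ W) :
    totalVar μ f A ≤ variationOn μ f W :=
  iInf₂_le W ⟨hW, hAW⟩

theorem totalVar_eq_variationOn [BorelSpace X] (hW : IsOpen W) :
    totalVar μ f W = variationOn μ f W :=
  (totalVar_le_variationOn hW Subset.rfl).antisymm (le_iInf₂ fun _ hV => variationOn_mono hV.2)

theorem totalVar_congr_ae (hfg : f =ᵐ[μ] g) (A : Set X) : totalVar μ f A = totalVar μ g A := by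
  simp only [totalVar, variationOn_congr_ae hfg]

theorem totalVar_const [BorelSpace X] (c : ℝ) (A : Set X) : totalVar μ (fun _ => c) A = 0 :=
  nonpos_iff_eq_zero.1 <| (totalVar_le_variationOn isOpen_univ (subset_univ A)).trans
    (variationOn_const c univ).le

theorem totalVar_min_add_totalVar_max_le [BorelSpace X] (hf : AEMeasurable f μ) (g : X → ℝ)
    (A : Set X) :
    totalVar μ (fun x => min (f x) (g x)) A + totalVar μ (fun x => max (f x) (g x)) A ≤
      totalVar μ f A + totalVar μ g A := by
  refine ENNReal.le_iInf₂_add_iInf₂ fun V ⟨hV, hAV⟩ W ⟨hW, hAW⟩ => ?_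
  have hVW : IsOpen (V ∩ W) := hV.inter hW
  have hA : A ⊆ V ∩ W := subset_inter hAV hAW
  calc _ ≤ variationOn μ (fun x => min (f x) (g x)) (V ∩ W) +
        variationOn μ (fun x => max (f x) (g x)) (V ∩ W) :=
        add_le_add (totalVar_le_variationOn hVW hA) (totalVar_le_variationOn hVW hA)
    _ ≤ variationOn μ f (V ∩ W) + variationOn μ g (V ∩ W) :=
        variationOn_min_add_variationOn_max_le hVW.measurableSet hf.restrict g
    _ ≤ variationOn μ f V + variationOn μ g W :=
        add_le_add (variationOn_mono inter_subset_left) (variationOn_mono inter_subset_right)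

theorem totalVar_const_sub (c : ℝ) (f : X → ℝ) (A : Set X) :
    totalVar μ (fun x => c - f x) A = totalVar μ f A := by
  have hle (f : X → ℝ) : totalVar μ (fun x => c - f x) A ≤ totalVar μ f A := by
    refine iInf₂_mono fun W _ => le_iInf₂ fun u hu => ?_
    have hLip (i : ℕ) : LocLipschitzOn (fun x => c - u i x) W := fun x hx => by
      obtain ⟨K, t, ht, hK⟩ := hu.1 i x hx
      exact ⟨K, t, ht, fun y hy z hz => by simpa only [edist_sub_left] using hK hy hz⟩
    have hlim : TendstoL1loc μ W (fun i x => c - u i x) fun x => c - f x := by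
      simpa only [tendstoL1loc_iff, edist_sub_left] using hu.2
    refine (iInf₂_le _ ⟨hLip, hlim⟩).trans (liminf_le_liminf (.of_forall fun i => ?_))
    exact (gradEnergy_congr_of_edist_eq μ (fun x y => edist_sub_left ..) W).le
  exact (hle f).antisymm (by simpa using hle fun x => c - f x)

end TotalVariation

section Perimeter

variable {X : Type*} [MetricSpace X] [MeasurableSpace X] {μ : Measure X} {A B : Set X}

theorem perimeter_congr_ae (hAB : A =ᵐ[μ] B) (D : Set X) : perimeter μ A D = perimeter μ B D :=
  totalVar_congr_ae (indicator_ae_eq_of_ae_eq_set hAB) D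

theorem perimeter_empty [BorelSpace X] (D : Set X) : perimeter μ ∅ D = 0 := by
  simpa only [perimeter, indicator_empty] using totalVar_const 0 D

theorem perimeter_compl (A D : Set X) : perimeter μ Aᶜ D = perimeter μ A D := by
  rw [perimeter, indicator_compl]
  exact totalVar_const_sub 1 _ D

theorem perimeter_univ [BorelSpace X] (D : Set X) : perimeter μ univ D = 0 := by
  rw [← compl_empty, perimeter_compl, perimeter_empty]

theorem perimeter_inter_add_perimeter_union_le [BorelSpace X] (hA : MeasurableSet A) (B D : Set X) :
    perimeter μ (A ∩ B) D + perimeter μ (A ∪ B) D ≤ perimeter μ A D + perimeter μ B D := by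
  have hmin : (A ∩ B).indicator (fun _ => (1 : ℝ)) = fun x =>
      min (A.indicator (fun _ => 1) x) (B.indicator (fun _ => 1) x) := by
    ext x
    by_cases hxA : x ∈ A <;> by_cases hxB : x ∈ B <;> simp [hxA, hxB]
  have hmax : (A ∪ B).indicator (fun _ => (1 : ℝ)) = fun x =>
      max (A.indicator (fun _ => 1) x) (B.indicator (fun _ => 1) x) := by
    ext x
    by_cases hxA : x ∈ A <;> by_cases hxB : x ∈ B <;> simp [hxA, hxB]
  rw [perimeter, perimeter, hmin, hmax]
  exact totalVar_min_add_totalVar_max_le (measurable_const.indicator hA).aemeasurable _ D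

theorem perimeter_union_le [BorelSpace X] (hA : MeasurableSet A) (B D : Set X) :
    perimeter μ (A ∪ B) D ≤ perimeter μ A D + perimeter μ B D :=
  le_add_self.trans (perimeter_inter_add_perimeter_union_le hA B D)

theorem perimeter_accumulate_le [BorelSpace X] {A : ℕ → Set X} (hA : ∀ n, MeasurableSet (A n))
    (D : Set X) (n : ℕ) :
    perimeter μ (accumulate A n) D ≤ ∑ k ∈ Finset.range (n + 1), perimeter μ (A k) D := by
  induction n with
  | zero => simp
  | succ n ih =>
    rw [accumulate_succ, Finset.sum_range_succ]
    exact (perimeter_union_le (.biUnion (to_countable _) fun k _ => hA k) _ D).trans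
      (add_le_add_left ih _)

theorem tendstoL1loc_indicator [IsFiniteMeasureOnCompacts μ] {A : ℕ → Set X}
    (hA : Monotone A) (hAm : ∀ n, MeasurableSet (A n)) (D : Set X) :
    TendstoL1loc μ D (fun n => (A n).indicator fun _ => (1 : ℝ))
      ((⋃ n, A n).indicator fun _ => 1) := by
  refine tendstoL1loc_iff.2 fun W _ hc _ => ?_
  have hfin : μ W ≠ ⊤ := ((measure_mono subset_closure).trans_lt hc.measure_lt_top).ne
  rw [← lintegral_zero (μ := μ.restrict W)]
  refine tendsto_lintegral_of_dominated_convergence (fun _ => 1) (fun n => ?_) (fun n => ?_)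
    (by simpa using hfin) (.of_forall fun x => ?_)
  · exact (measurable_const.indicator (hAm n)).edist
      (measurable_const.indicator (.iUnion hAm))
  · refine .of_forall fun x => ?_
    by_cases h1 : x ∈ A n <;> by_cases h2 : x ∈ ⋃ n, A n <;> simp [h1, h2]
  · exact tendsto_const_nhds.congr' ((tendsto_pure.1 (hA.tendsto_indicator A
      (fun _ => (1 : ℝ)) x)).mono fun n hn => (edist_eq_zero.2 hn).symm)

theorem perimeter_iUnion_nat_le [BorelSpace X] [LocallyCompactSpace X]
    [SecondCountableTopology X] [IsFiniteMeasureOnCompacts μ] {A : ℕ → Set X}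
    (hA : ∀ n, MeasurableSet (A n)) {D : Set X} (hD : IsOpen D) :
    perimeter μ (⋃ n, A n) D ≤ ∑' n, perimeter μ (A n) D := by
  have hAm (n : ℕ) : MeasurableSet (accumulate A n) := .biUnion (to_countable _) fun k _ => hA k
  have hlim := tendstoL1loc_indicator (μ := μ) monotone_accumulate hAm D
  rw [iUnion_accumulate] at hlim
  rw [perimeter, totalVar_eq_variationOn hD]
  refine (variationOn_le_liminf hD (fun n => (measurable_const.indicator (hAm n)).aemeasurable)
    hlim).trans ((liminf_le_liminf (.of_forall fun n => ?_)).trans_eq (liminf_const _))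
  rw [← totalVar_eq_variationOn hD]
  exact (perimeter_accumulate_le hA D n).trans (ENNReal.sum_le_tsum _)

theorem perimeter_iUnion_le [BorelSpace X] [LocallyCompactSpace X] [SecondCountableTopology X]
    [IsFiniteMeasureOnCompacts μ] {ι : Type*} [Countable ι] {A : ι → Set X}
    (hA : ∀ i, MeasurableSet (A i)) {D : Set X} (hD : IsOpen D) :
    perimeter μ (⋃ i, A i) D ≤ ∑' i, perimeter μ (A i) D := by
  have := Encodable.ofCountable ι
  rw [← Encodable.iUnion_decode₂,
    ← tsum_iUnion_decode₂ (fun S => perimeter μ S D) (perimeter_empty D)]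
  exact perimeter_iUnion_nat_le (fun n => .iUnion fun i => .iUnion fun _ => hA i) hD

end Perimeter

theorem isFiniteMeasureOnCompacts_of_measure_ball_lt_top {X : Type*} [PseudoMetricSpace X]
    [MeasurableSpace X] {μ : Measure X} (h : ∀ (x : X) (r : ℝ), 0 < r → μ (ball x r) < ⊤) :
    IsFiniteMeasureOnCompacts μ where
  lt_top_of_isCompact K hK := by
    rcases K.eq_empty_or_nonempty with rfl | ⟨x, -⟩
    · simp
    obtain ⟨r, hr, hKr⟩ := hK.isBounded.subset_ball_lt 0 x
    exact (measure_mono hKr).trans_lt (h x r hr)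

theorem isOpenPosMeasure_of_measure_ball_pos {X : Type*} [PseudoMetricSpace X]
    [MeasurableSpace X] {μ : Measure X} (h : ∀ (x : X) (r : ℝ), 0 < r → 0 < μ (ball x r)) :
    μ.IsOpenPosMeasure where
  open_pos U hU := by
    rintro ⟨x, hx⟩
    obtain ⟨r, hr, hrU⟩ := Metric.isOpen_iff.1 hU x hx
    exact ((h x r hr).trans_le (measure_mono hrU)).ne'

section Poincare

variable {μ : Measure X}

theorem min_measure_le_lintegral_edist_indicator {α : Type*} [MeasurableSpace α] (ν : Measure α)
    {A : Set α} (hA : MeasurableSet A) (c : ℝ) :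
    min (ν A) (ν Aᶜ) ≤ ∫⁻ x, edist (A.indicator (fun _ => (1 : ℝ)) x) c ∂ν := by
  have hint : ∫⁻ x in A, edist (A.indicator (fun _ => (1 : ℝ)) x) c ∂ν = edist 1 c * ν A := by
    rw [setLIntegral_congr_fun hA fun x hx => by rw [indicator_of_mem hx], setLIntegral_const]
  have hint' : ∫⁻ x in Aᶜ, edist (A.indicator (fun _ => (1 : ℝ)) x) c ∂ν = edist 0 c * ν Aᶜ := by
    rw [setLIntegral_congr_fun hA.compl fun x hx => by rw [indicator_of_notMem hx],
      setLIntegral_const]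
  have hone : (1 : ℝ≥0∞) ≤ edist 1 c + edist 0 c := by
    simpa [edist_dist] using edist_triangle_right (1 : ℝ) 0 c
  calc min (ν A) (ν Aᶜ) ≤ (edist 1 c + edist 0 c) * min (ν A) (ν Aᶜ) := le_mul_of_one_le_left' hone
    _ ≤ edist 1 c * ν A + edist 0 c * ν Aᶜ := by
      rw [add_mul]
      gcongr
      exacts [min_le_left _ _, min_le_right _ _]
    _ = _ := by rw [← hint, ← hint', lintegral_add_compl _ hA]

variable [ProperSpace X] [IsFiniteMeasureOnCompacts μ] [μ.IsOpenPosMeasure]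

theorem SupportsPoincare.exists_mul_lintegral_edist_average_le (hP : SupportsPoincare μ) :
    ∃ C lam : ℝ, 0 < C ∧ 1 ≤ lam ∧ ∀ (x : X) (r : ℝ), 0 < r → ∀ u : X → ℝ, LocLipschitzOn u univ →
      μ (ball x (lam * r)) * ∫⁻ y in ball x r, edist (u y) (⨍ z in ball x r, u z ∂μ) ∂μ ≤
        ENNReal.ofReal (C * r) * μ (ball x r) * gradEnergy μ u univ := by
  obtain ⟨C, lam, hC, hlam, hP⟩ := hP
  refine ⟨C, lam, hC, hlam, fun x r hr u hu => ?_⟩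
  have hK : ENNReal.ofReal (C * r) * μ (ball x r) ≠ 0 :=
    mul_ne_zero (ENNReal.ofReal_pos.2 (by positivity)).ne' (measure_ball_pos μ x hr).ne'
  have hK' : ENNReal.ofReal (C * r) * μ (ball x r) ≠ ⊤ :=
    ENNReal.mul_ne_top ENNReal.ofReal_ne_top measure_ball_lt_top.ne
  have hint (y : X) (s : ℝ) : IntegrableOn u (ball y s) μ :=
    ((hu.continuousOn.mono (subset_univ _)).integrableOn_compact
      (isCompact_closedBall y s)).mono_set ball_subset_closedBall
  simp only [gradEnergy_eq_iInf_isUpperGradientOn, ENNReal.mul_iInf_of_ne hK hK', edist_dist,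
    Real.dist_eq]
  exact le_iInf₂ fun g hg => (hP x r hr u g hint hg.isUpperGradient).trans
    (by gcongr; exact subset_univ _)

theorem SupportsPoincare.exists_mul_min_measure_le_perimeter (hP : SupportsPoincare μ) :
    ∃ C lam : ℝ, 0 < C ∧ 1 ≤ lam ∧ ∀ (x : X) (r : ℝ), 0 < r → ∀ A : Set X, MeasurableSet A →
      μ (ball x (lam * r)) * min (μ (A ∩ ball x r)) (μ (Aᶜ ∩ ball x r)) ≤
        ENNReal.ofReal (C * r) * μ (ball x r) * perimeter μ A univ := by
  obtain ⟨C, lam, hC, hlam, hP⟩ := hP.exists_mul_lintegral_edist_average_le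
  refine ⟨C, lam, hC, hlam, fun x r hr A hA => ?_⟩
  set M := μ (ball x (lam * r))
  set K := ENNReal.ofReal (C * r) * μ (ball x r)
  have hK : K ≠ 0 :=
    mul_ne_zero (ENNReal.ofReal_pos.2 (by positivity)).ne' (measure_ball_pos μ x hr).ne'
  have hK' : K ≠ ⊤ := ENNReal.mul_ne_top ENNReal.ofReal_ne_top measure_ball_lt_top.ne
  rw [perimeter, totalVar_eq_variationOn isOpen_univ, variationOn_eq_iInf_iSup]
  simp only [ENNReal.mul_iInf_of_ne hK hK']
  refine le_iInf₂ fun u ⟨hu, huA⟩ => ?_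
  set f : X → ℝ := A.indicator fun _ => 1
  have hbound (i : ℕ) : M * min (μ (A ∩ ball x r)) (μ (Aᶜ ∩ ball x r)) ≤
      M * ∫⁻ y in ball x r, edist (u i y) (f y) ∂μ + K * ⨆ i, gradEnergy μ (u i) univ := by
    set c := ⨍ z in ball x r, u i z ∂μ
    have hmin := min_measure_le_lintegral_edist_indicator (μ.restrict (ball x r)) hA c
    rw [Measure.restrict_apply hA, Measure.restrict_apply hA.compl] at hmin
    calc _ ≤ M * (∫⁻ y in ball x r, edist (u i y) (f y) ∂μ +
          ∫⁻ y in ball x r, edist (u i y) c ∂μ) := by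
          gcongr
          exact hmin.trans (lintegral_edist_le_add
            (((hu i).continuousOn.mono (subset_univ _)).aemeasurable measurableSet_ball)
            (measurable_const.indicator hA).aemeasurable fun y => edist_triangle_left _ _ _)
      _ ≤ _ := by
          rw [mul_add]
          exact add_le_add_right ((hP x r hr _ (hu i)).trans
            (mul_le_mul_right (le_iSup (fun i => gradEnergy μ (u i) univ) i) K)) _
  have hlim := tendstoL1loc_iff.1 huA (ball x r) isOpen_ball
    ((isCompact_closedBall x r).of_isClosed_subset isClosed_closure closure_ball_subset_closedBall)
    (subset_univ _)
  refine ge_of_tendsto' (x := atTop) ?_ hbound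
  simpa using (ENNReal.Tendsto.const_mul hlim (.inr measure_ball_lt_top.ne)).add_const _

theorem SupportsPoincare.measure_eq_zero_or_measure_compl_eq_zero (hP : SupportsPoincare μ)
    {A : Set X} (hA : MeasurableSet A) (hA0 : perimeter μ A univ = 0) : μ A = 0 ∨ μ Aᶜ = 0 := by
  rcases isEmpty_or_nonempty X with hX | ⟨⟨x₀⟩⟩
  · simp [Subsingleton.elim A ∅]
  obtain ⟨C, lam, -, hlam, hP⟩ := hP.exists_mul_min_measure_le_perimeter
  by_contra! ⟨hne, hne'⟩
  have hpos {S : Set X} (hS : μ S ≠ 0) : ∃ n : ℕ, 0 < μ (S ∩ ball x₀ n) :=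
    exists_measure_pos_of_not_measure_iUnion_null
      (by rwa [← inter_iUnion, iUnion_ball_nat, inter_univ])
  obtain ⟨m, hm⟩ := hpos hne
  obtain ⟨n, hn⟩ := hpos hne'
  set r : ℝ := m + n + 1
  have hr : 0 < r := by positivity
  have hmr : ball x₀ m ⊆ ball x₀ r := ball_subset_ball (by simp only [r]; linarith)
  have hnr : ball x₀ n ⊆ ball x₀ r := ball_subset_ball (by simp only [r]; linarith)
  refine ((CanonicallyOrderedAdd.mul_pos.2 ⟨measure_ball_pos μ x₀ (by positivity), lt_min
    (hm.trans_le (measure_mono (inter_subset_inter_right _ hmr)))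
    (hn.trans_le (measure_mono (inter_subset_inter_right _ hnr)))⟩).trans_le
    (hP x₀ r hr A hA)).ne' ?_
  rw [hA0, mul_zero]

theorem SupportsPoincare.isIndecomposableIn_univ (hP : SupportsPoincare μ) :
    IsIndecomposableIn μ univ univ := by
  rintro ⟨F, G, hF, -, hFG, -, -, -, hF0, hG0, hadd⟩
  rw [perimeter_univ, eq_comm, add_eq_zero] at hadd
  rcases hP.measure_eq_zero_or_measure_compl_eq_zero hF hadd.1 with h | h
  · exact hF0.ne' h
  · exact hG0.ne' (measure_mono_null hFG.subset_compl_left h)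

end Poincare

section Splitting

variable {X : Type*} [MetricSpace X] [MeasurableSpace X] {μ : Measure X} {A E F G S : Set X}

/-- `A` splits off from `F`: cutting `F` into `A` and `F \ A` creates no additional perimeter. Only
the inequality is required, the opposite one being subadditivity. Essential components split off,
and a set is indecomposable if only null sets and sets of null complement split off from it. -/
structure SplitsOff (μ : Measure X) (A F : Set X) : Prop where
  measurableSet : MeasurableSet A
  subset : A ⊆ F
  perimeter_add_le : perimeter μ A univ + perimeter μ (F \ A) univ ≤ perimeter μ F univ

theorem SplitsOff.perimeter_le (h : SplitsOff μ A F) : perimeter μ A univ ≤ perimeter μ F univ :=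
  le_self_add.trans h.perimeter_add_le

theorem SplitsOff.diff (h : SplitsOff μ A F) (hF : MeasurableSet F) : SplitsOff μ (F \ A) F where
  measurableSet := hF.diff h.measurableSet
  subset := sdiff_subset
  perimeter_add_le := by
    rw [sdiff_sdiff_cancel_left h.subset, add_comm]
    exact h.perimeter_add_le

theorem splitsOff_univ_of_perimeter_eq_zero (hA : MeasurableSet A) (hA0 : perimeter μ A univ = 0) :
    SplitsOff μ A univ :=
  ⟨hA, subset_univ A, by simp [← compl_eq_univ_sdiff, perimeter_compl, hA0]⟩

section Partition

variable {I : Set ℕ} {C : ℕ → Set X} {i : ℕ}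

theorem IsEssentialPartition.measurableSet (h : IsEssentialPartition μ S I C) (hi : i ∈ I) :
    MeasurableSet (C i) :=
  h.1 i hi

theorem IsEssentialPartition.measure_ne_zero (h : IsEssentialPartition μ S I C) (hi : i ∈ I) :
    μ (C i) ≠ 0 :=
  (h.2.2.2.1 i hi).ne'

theorem IsEssentialPartition.perimeter_lt_top (h : IsEssentialPartition μ S I C) (hi : i ∈ I) :
    perimeter μ (C i) univ < ⊤ :=
  h.2.2.2.2.1 i hi

end Partition

variable [BorelSpace X]

theorem SplitsOff.inter (h : SplitsOff μ A F) (hF : perimeter μ F univ ≠ ⊤) (hS : MeasurableSet S)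
    (hSF : S ⊆ F) : SplitsOff μ (S ∩ A) S where
  measurableSet := hS.inter h.measurableSet
  subset := inter_subset_left
  perimeter_add_le := by
    rcases eq_or_ne (perimeter μ S univ) ⊤ with hStop | hStop
    · simp [hStop]
    have hinter : (S ∪ A) ∩ (F \ A) = S \ A := by
      rw [← inter_sdiff_assoc, inter_eq_left.2 (union_subset hSF h.subset), union_sdiff_right]
    have hunion : S ∪ A ∪ F \ A = F := by
      rw [union_assoc, union_sdiff_cancel h.subset, union_eq_right.2 hSF]
    have hsubmod := perimeter_inter_add_perimeter_union_le (μ := μ) hS A univ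
    have hsubmod' :=
      perimeter_inter_add_perimeter_union_le (μ := μ) (hS.union h.measurableSet) (F \ A) univ
    rw [hinter, hunion] at hsubmod'
    have hA : perimeter μ A univ ≠ ⊤ := ne_top_of_le_ne_top hF h.perimeter_le
    have hSA : perimeter μ (S ∪ A) univ ≠ ⊤ :=
      ne_top_of_le_ne_top (ENNReal.add_ne_top.2 ⟨hStop, hA⟩) (le_add_self.trans hsubmod)
    rw [sdiff_self_inter]
    refine (ENNReal.add_le_add_iff_right (ENNReal.add_ne_top.2 ⟨hSA, hF⟩)).1 ?_
    calc _ = (perimeter μ (S ∩ A) univ + perimeter μ (S ∪ A) univ) +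
          (perimeter μ (S \ A) univ + perimeter μ F univ) := by ring
      _ ≤ (perimeter μ S univ + perimeter μ A univ) +
          (perimeter μ (S ∪ A) univ + perimeter μ (F \ A) univ) := add_le_add hsubmod hsubmod'
      _ = perimeter μ S univ + (perimeter μ (S ∪ A) univ +
          (perimeter μ A univ + perimeter μ (F \ A) univ)) := by ring
      _ ≤ _ := by gcongr; exact h.perimeter_add_le

theorem isIndecomposableIn_univ_iff (hS : MeasurableSet S) (hfin : perimeter μ S univ < ⊤) :
    IsIndecomposableIn μ S univ ↔ ∀ A, SplitsOff μ A S → μ A = 0 ∨ μ (S \ A) = 0 := by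
  refine ⟨fun h A hA => ?_, ?_⟩
  · by_contra! ⟨hA0, hA0'⟩
    have hle := perimeter_union_le (μ := μ) hA.measurableSet (S \ A) univ
    rw [union_sdiff_cancel hA.subset] at hle
    exact h ⟨A, S \ A, hA.measurableSet, hS.diff hA.measurableSet, disjoint_sdiff_right,
      by rw [union_sdiff_cancel hA.subset, inter_univ], hA.perimeter_le.trans_lt hfin,
      (hA.diff hS).perimeter_le.trans_lt hfin, pos_iff_ne_zero.2 hA0, pos_iff_ne_zero.2 hA0',
      hle.antisymm hA.perimeter_add_le⟩
  · rintro h ⟨A, B, hA, -, hAB, hS, -, -, hA0, hB0, hadd⟩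
    rw [inter_univ] at hS
    have hB : S \ A = B := by rw [← hS, union_sdiff_left, hAB.symm.sdiff_eq_left]
    rcases h A ⟨hA, hS ▸ subset_union_left, by rw [hB, hadd]⟩ with h0 | h0
    · exact hA0.ne' h0
    · exact hB0.ne' (hB ▸ h0)

section Partition

variable [LocallyCompactSpace X] [SecondCountableTopology X] [IsFiniteMeasureOnCompacts μ]
  {I : Set ℕ} {C : ℕ → Set X} {i : ℕ}

theorem IsEssentialPartition.splitsOff (h : IsEssentialPartition μ S I C) (hi : i ∈ I) :
    SplitsOff μ (C i) S := by
  classical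
  obtain ⟨hm, hdisj, hS, -, -, -, hsum⟩ := h
  refine ⟨hm i hi, hS ▸ subset_biUnion_of_mem hi, ?_⟩
  have hrest : S \ C i = ⋃ j : I, C j \ C i := by rw [← hS, biUnion_eq_iUnion, iUnion_sdiff]
  rw [hsum, ENNReal.tsum_eq_add_tsum_ite ⟨i, hi⟩, hrest]
  refine add_le_add_right ((perimeter_iUnion_le (fun j : I => (hm j j.2).diff (hm i hi))
    isOpen_univ).trans (ENNReal.tsum_le_tsum fun j => ?_)) _
  split_ifs with hj
  · rw [hj, sdiff_self, perimeter_empty]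
  · rw [(hdisj j j.2 i hi fun h => hj (Subtype.ext h)).sdiff_eq_left]

theorem IsEssentialPartition.measure_diff_eq_zero (h : IsEssentialPartition μ S I C) (hi : i ∈ I)
    (hS : MeasurableSet S) (hfin : perimeter μ S univ < ⊤) (hind : IsIndecomposableIn μ S univ) :
    μ (S \ C i) = 0 :=
  ((isIndecomposableIn_univ_iff hS hfin).1 hind _ (h.splitsOff hi)).resolve_left
    (h.measure_ne_zero hi)

end Partition

theorem SplitsOff.perimeter_eq_zero_of_measure_inter_eq_zero (hG : SplitsOff μ G Eᶜ)
    (hA : SplitsOff μ A Gᶜ) (hE : MeasurableSet E) (hEfin : perimeter μ E univ ≠ ⊤)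
    (hAE : μ (A ∩ E) = 0) : perimeter μ A univ = 0 := by
  have hAG : Disjoint A G := subset_compl_iff_disjoint_right.1 hA.subset
  have hae : (A \ E : Set X) =ᵐ[μ] A := sdiff_ae_eq_self.2 hAE
  have hcompl : (Gᶜ \ A)ᶜ = G ∪ A := by rw [compl_sdiff, compl_compl, union_comm]
  have hunion : perimeter μ (G ∪ A \ E) univ = perimeter μ (Gᶜ \ A) univ := by
    rw [perimeter_congr_ae (ae_eq_set_union (ae_eq_refl G) hae), ← hcompl, perimeter_compl]
  have hsplit := (hG.inter (by rwa [perimeter_compl])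
    (hG.measurableSet.union (hA.measurableSet.diff hE))
    (union_subset hG.subset fun x hx => hx.2)).perimeter_add_le
  rw [union_inter_cancel_left, union_sdiff_left, (hAG.mono_left sdiff_subset).sdiff_eq_left,
    perimeter_congr_ae hae, hunion] at hsplit
  have hGfin : perimeter μ G univ ≠ ⊤ :=
    ne_top_of_le_ne_top hEfin (hG.perimeter_le.trans_eq (perimeter_compl E univ))
  have hle : perimeter μ G univ + (perimeter μ A univ + perimeter μ A univ) ≤
      perimeter μ G univ + 0 :=
    calc _ = perimeter μ A univ + (perimeter μ G univ + perimeter μ A univ) := by ring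
      _ ≤ perimeter μ A univ + perimeter μ (Gᶜ \ A) univ := add_le_add_right hsplit _
      _ ≤ perimeter μ Gᶜ univ := hA.perimeter_add_le
      _ = perimeter μ G univ + 0 := by rw [perimeter_compl, add_zero]
  exact (add_eq_zero.1 (nonpos_iff_eq_zero.1 ((ENNReal.add_le_add_iff_left hGfin).1 hle))).1

theorem SplitsOff.measure_eq_zero_of_measure_inter_eq_zero (hX : IsIndecomposableIn μ univ univ)
    (hG : SplitsOff μ G Eᶜ) (hG0 : μ G ≠ 0) (hA : SplitsOff μ A Gᶜ) (hE : MeasurableSet E)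
    (hEfin : perimeter μ E univ ≠ ⊤) (hAE : μ (A ∩ E) = 0) : μ A = 0 := by
  have hsplit := splitsOff_univ_of_perimeter_eq_zero hA.measurableSet
    (hG.perimeter_eq_zero_of_measure_inter_eq_zero hA hE hEfin hAE)
  have hnull := (isIndecomposableIn_univ_iff .univ (by simp [perimeter_univ])).1 hX A hsplit
  rw [← compl_eq_univ_sdiff] at hnull
  exact hnull.resolve_right fun h => hG0 (measure_mono_null (subset_compl_comm.1 hA.subset) h)

theorem IsIndecomposableIn.compl_of_splitsOff (hX : IsIndecomposableIn μ univ univ)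
    (hind : IsIndecomposableIn μ E univ) (hE : MeasurableSet E) (hEfin : perimeter μ E univ < ⊤)
    (hG : SplitsOff μ G Eᶜ) (hG0 : μ G ≠ 0) : IsIndecomposableIn μ Gᶜ univ := by
  have hGc : MeasurableSet Gᶜ := hG.measurableSet.compl
  have hGfin : perimeter μ Gᶜ univ < ⊤ := by
    rw [perimeter_compl]
    exact (hG.perimeter_le.trans_eq (perimeter_compl E univ)).trans_lt hEfin
  refine (isIndecomposableIn_univ_iff hGc hGfin).2 fun A hA => ?_
  have hEA := hA.inter hGfin.ne hE (subset_compl_comm.1 hG.subset)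
  refine ((isIndecomposableIn_univ_iff hE hEfin).1 hind _ hEA).imp (fun h => ?_) fun h => ?_
  · refine hG.measure_eq_zero_of_measure_inter_eq_zero hX hG0 hA hE hEfin.ne ?_
    rwa [inter_comm]
  · refine hG.measure_eq_zero_of_measure_inter_eq_zero hX hG0 (hA.diff hGc) hE hEfin.ne
      (measure_mono_null ?_ h)
    rw [sdiff_self_inter]
    exact fun x hx => ⟨hx.2, hx.1.2⟩

end Splitting

theorem hole_is_saturated_general {X : Type*} [MetricSpace X] [MeasurableSpace X] [BorelSpace X]
    [LocallyCompactSpace X] [SecondCountableTopology X] {μ : Measure X}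
    [IsFiniteMeasureOnCompacts μ] (hX : IsIndecomposableIn μ univ univ)
    {E : Set X} (hE : MeasurableSet E) (hEfin : perimeter μ E univ < ⊤)
    (hindec : IsIndecomposableIn μ E univ)
    {I : Set ℕ} {G : ℕ → Set X} (hdec : IsEssentialPartition μ (univ \ E) I G)
    {i : ℕ} (hi : i ∈ I) (hinf : μ (G i)ᶜ = ⊤)
    {J : Set ℕ} {H : ℕ → Set X} (hdecG : IsEssentialPartition μ (univ \ G i) J H) :
    μ (symmDiff (G i) (saturationOf μ (G i) J H)) = 0 := by
  rw [← compl_eq_univ_sdiff] at hdec hdecG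
  have hGind : IsIndecomposableIn μ (G i)ᶜ univ :=
    hX.compl_of_splitsOff hindec hE hEfin (hdec.splitsOff hi) (hdec.measure_ne_zero hi)
  have hGfin : perimeter μ (G i)ᶜ univ < ⊤ := by
    rw [perimeter_compl]
    exact hdec.perimeter_lt_top hi
  have hH (j : ℕ) (hj : j ∈ J) : μ (H j) = ⊤ := by
    have hdiff := hdecG.measure_diff_eq_zero hj (hdec.measurableSet hi).compl hGfin hGind
    exact top_le_iff.1 (hinf ▸ measure_mono_ae (ae_le_set.2 hdiff))
  have hsat : saturationOf μ (G i) J H = G i :=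
    union_eq_left.2 (iUnion₂_subset fun j hj => absurd (hH j hj.1) hj.2.ne)
  rw [hsat, symmDiff_self, bot_eq_empty, measure_empty]

/-- **Proposition (i).** In a PI space with `μ(X) = ∞`, any hole of an
indecomposable set `E` (i.e. any essential connected component of `X ∖ E` of
finite measure) is saturated. -/
theorem hole_is_saturated
    [ProperSpace X] (μ : Measure X)
    (hball : ∀ (x : X) (r : ℝ), 0 < r → 0 < μ (ball x r) ∧ μ (ball x r) < ⊤)
    (hPI : IsPISpace μ) (hinf : μ Set.univ = ⊤)
    (E : Set X) (hE : MeasurableSet E) (hEfin : perimeter μ E Set.univ < ⊤)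
    (hindec : IsIndecomposableIn μ E Set.univ)
    (hcompfin : perimeter μ (Set.univ \ E) Set.univ < ⊤)
    (I : Set ℕ) (G : ℕ → Set X)
    (hdec : IsEssentialPartition μ (Set.univ \ E) I G) :
    ∀ i ∈ I, μ (G i) < ⊤ →
      ∀ (J : Set ℕ) (H : ℕ → Set X),
        IsEssentialPartition μ (Set.univ \ G i) J H →
        μ (symmDiff (G i) (saturationOf μ (G i) J H)) = 0 := by
  have := isFiniteMeasureOnCompacts_of_measure_ball_lt_top fun x r hr => (hball x r hr).2
  have := isOpenPosMeasure_of_measure_ball_pos fun x r hr => (hball x r hr).1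
  exact fun i hi hGfin J H hdecG =>
    hole_is_saturated_general hPI.2.2.isIndecomposableIn_univ hE hEfin hindec hdec hi
      (by rw [measure_compl (hdec.measurableSet hi) hGfin.ne, hinf, ENNReal.top_sub hGfin.ne]) hdecG
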